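/- For an integer N ≥ 2, the following two conditions are equivalent: (i) N is NOT of any of the forms p^α (α ≥ 1), p^α·q (α ≥ 1), p²·q², p^α·q·r (α = 1 or 2), p·q·r·s, where p, q, r, s denote distinct primes; (ii) there exist distinct primes p₁, p₂ and integers n₁, n₂, n₃ ≥ 2 such that N = n₁·n₂·n₃·p₁·p₂ and gcd(n₁·p₁, n₂·p₂) = 1. -/

import Mathlib

/-!
Write `Ω N` for the number of prime factors of `N` with multiplicity. Condition (ii) says that some
proper divisor of `N` splits as `A * B` with `A`, `B` coprime, `2 ≤ Ω A` and `2 ≤ Ω B`.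

If (ii) holds then `5 ≤ Ω N`, which rules out the last three families, all with `Ω N ≤ 4`. If `N`
were of the form `p ^ α * q` (a prime power divides such a number), then `p` would divide every
non-prime divisor other than `1` (`dvd_of_mul_dvd_pow_mul`), hence both `A` and `B`, against
coprimality.

Conversely, let `N` avoid all the forms. If `N` is squarefree, it has at least five prime factors
`p, q, r, s, …`, and `A = p * q`, `B = r * s` work (`exists_of_squarefree`). Otherwise
`N = p ^ a * m` with `2 ≤ a` and `p ∤ m`; as `m` is neither `1` nor a prime, it is divisible by a
product `q * r` of two primes, and `A = p ^ 2`, `B = q * r` work unless `N = p ^ 2 * q * r`, which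
is one of the excluded forms (`exists_of_sq_dvd`).
-/

/-- A divisor of `p ^ α * q` that is prime to `p` divides the prime `q`, so it cannot be a product
of two nonunits. The primes `p` and `q` may coincide. -/
lemma dvd_of_mul_dvd_pow_mul {p q α n r : ℕ} (hp : p.Prime) (hq : q.Prime) (hn : 2 ≤ n)
    (hr : r.Prime) (h : n * r ∣ p ^ α * q) : p ∣ n * r := by
  by_contra hpn
  have hc : Nat.Coprime (n * r) (p ^ α) :=
    ((hp.coprime_iff_not_dvd.2 hpn).pow_left α).symm
  have hd : n * r ∣ q := hc.dvd_of_dvd_mul_left h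
  have hr2 := hr.two_le
  rcases (Nat.dvd_prime hq).1 hd with h1 | h1
  · nlinarith
  · exact Nat.not_prime_mul (by omega) (by omega) (h1 ▸ hq)

/-- Condition (ii): the shape of the orders of cyclic groups admitting a Vuza factorization. -/
def IsVuzaOrder (N : ℕ) : Prop :=
  ∃ p₁ p₂ n₁ n₂ n₃ : ℕ, Nat.Prime p₁ ∧ Nat.Prime p₂ ∧ p₁ ≠ p₂ ∧
    2 ≤ n₁ ∧ 2 ≤ n₂ ∧ 2 ≤ n₃ ∧ N = n₁ * n₂ * n₃ * p₁ * p₂ ∧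
    Nat.gcd (n₁ * p₁) (n₂ * p₂) = 1

/-- A squarefree number with at least five prime factors satisfies condition (ii); with fewer, it
is of one of the special forms. -/
lemma exists_of_squarefree {N : ℕ} (hN : 2 ≤ N) (hs : Squarefree N)
    (h1 : ¬ ∃ p α : ℕ, Nat.Prime p ∧ 1 ≤ α ∧ N = p ^ α)
    (h2 : ¬ ∃ p q α : ℕ, Nat.Prime p ∧ Nat.Prime q ∧ p ≠ q ∧ 1 ≤ α ∧ N = p ^ α * q)
    (h4 : ¬ ∃ p q r α : ℕ, Nat.Prime p ∧ Nat.Prime q ∧ Nat.Prime r ∧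
      p ≠ q ∧ p ≠ r ∧ q ≠ r ∧ (α = 1 ∨ α = 2) ∧ N = p ^ α * q * r)
    (h5 : ¬ ∃ p q r s : ℕ, Nat.Prime p ∧ Nat.Prime q ∧ Nat.Prime r ∧ Nat.Prime s ∧
      p ≠ q ∧ p ≠ r ∧ p ≠ s ∧ q ≠ r ∧ q ≠ s ∧ r ≠ s ∧ N = p * q * r * s) :
    IsVuzaOrder N := by
  have ne {x y : ℕ} (hx : x.Prime) (h : x * y ∣ N) : x ≠ y := by
    rintro rfl
    exact hx.one_lt.ne' (Nat.isUnit_iff.1 (hs x h))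
  obtain ⟨p, hp, a, rfl⟩ := Nat.exists_prime_and_dvd (show N ≠ 1 by omega)
  have ha : a ≠ 1 := by
    rintro rfl
    exact h1 ⟨p, 1, hp, le_rfl, by ring⟩
  obtain ⟨q, hq, b, rfl⟩ := Nat.exists_prime_and_dvd ha
  have hpq : p ≠ q := ne hp ⟨b, by ring⟩
  have hb : b ≠ 1 := by
    rintro rfl
    exact h2 ⟨p, q, 1, hp, hq, hpq, le_rfl, by ring⟩
  obtain ⟨r, hr, c, rfl⟩ := Nat.exists_prime_and_dvd hb
  have hpr : p ≠ r := ne hp ⟨q * c, by ring⟩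
  have hqr : q ≠ r := ne hq ⟨p * c, by ring⟩
  have hc : c ≠ 1 := by
    rintro rfl
    exact h4 ⟨p, q, r, 1, hp, hq, hr, hpq, hpr, hqr, Or.inl rfl, by ring⟩
  obtain ⟨s, hs', d, rfl⟩ := Nat.exists_prime_and_dvd hc
  have hps : p ≠ s := ne hp ⟨q * r * d, by ring⟩
  have hqs : q ≠ s := ne hq ⟨p * r * d, by ring⟩
  have hrs : r ≠ s := ne hr ⟨p * q * d, by ring⟩
  have hd : d ≠ 1 := by
    rintro rfl
    exact h5 ⟨p, q, r, s, hp, hq, hr, hs', hpq, hpr, hps, hqr, hqs, hrs, by ring⟩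
  have hd0 : d ≠ 0 := by
    rintro rfl
    simp at hN
  refine ⟨p, r, q, s, d, hp, hr, hpr, hq.two_le, hs'.two_le, by omega, by ring, ?_⟩
  change Nat.Coprime _ _
  simp only [Nat.coprime_mul_iff_left, Nat.coprime_mul_iff_right, Nat.coprime_primes, *]
  simp [hpr, hps, hqr, hqs]

/-- For `N` divisible by the square of a prime `p`, take out the full power of `p` and two further
prime factors. -/
lemma exists_of_sq_dvd {N p : ℕ} (hN : 2 ≤ N) (hp : p.Prime) (hpN : p ^ 2 ∣ N)
    (h1 : ¬ ∃ p α : ℕ, Nat.Prime p ∧ 1 ≤ α ∧ N = p ^ α)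
    (h2 : ¬ ∃ p q α : ℕ, Nat.Prime p ∧ Nat.Prime q ∧ p ≠ q ∧ 1 ≤ α ∧ N = p ^ α * q)
    (h3 : ¬ ∃ p q : ℕ, Nat.Prime p ∧ Nat.Prime q ∧ p ≠ q ∧ N = p ^ 2 * q ^ 2)
    (h4 : ¬ ∃ p q r α : ℕ, Nat.Prime p ∧ Nat.Prime q ∧ Nat.Prime r ∧
      p ≠ q ∧ p ≠ r ∧ q ≠ r ∧ (α = 1 ∨ α = 2) ∧ N = p ^ α * q * r) :
    IsVuzaOrder N := by
  obtain ⟨a, m, hpm, rfl⟩ :=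
    Nat.exists_eq_pow_mul_and_not_dvd (show N ≠ 0 by omega) p hp.ne_one
  have ha : 2 ≤ a := by
    have hcop : Nat.Coprime (p ^ 2) m := (hp.coprime_iff_not_dvd.2 hpm).pow_left 2
    exact (Nat.pow_dvd_pow_iff_le_right hp.one_lt).1 (hcop.dvd_of_dvd_mul_right hpN)
  have hm : m ≠ 1 := by
    rintro rfl
    exact h1 ⟨p, a, hp, by omega, by ring⟩
  obtain ⟨q, hq, b, rfl⟩ := Nat.exists_prime_and_dvd hm
  have hpq : p ≠ q := by
    rintro rfl
    exact hpm ⟨b, rfl⟩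
  have hb : b ≠ 1 := by
    rintro rfl
    exact h2 ⟨p, q, a, hp, hq, hpq, by omega, by ring⟩
  obtain ⟨r, hr, c, rfl⟩ := Nat.exists_prime_and_dvd hb
  have hpr : p ≠ r := by
    rintro rfl
    exact hpm ⟨q * c, by ring⟩
  obtain ⟨k, rfl⟩ := Nat.exists_eq_add_of_le ha
  have hk0 : p ^ k * c ≠ 0 := by
    intro h
    have : p ^ (2 + k) * (q * (r * c)) = p ^ 2 * q * r * (p ^ k * c) := by ring
    rw [this, h] at hN
    simp at hN
  have hk1 : p ^ k * c ≠ 1 := by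
    intro h
    have hN' : p ^ (2 + k) * (q * (r * c)) = p ^ 2 * q * r := by
      calc _ = p ^ 2 * q * r * (p ^ k * c) := by ring
        _ = _ := by rw [h, mul_one]
    by_cases hqr : q = r
    · subst hqr
      exact h3 ⟨p, q, hp, hq, hpq, by rw [hN']; ring⟩
    · exact h4 ⟨p, q, r, 2, hp, hq, hr, hpq, hpr, hqr, Or.inr rfl, hN'⟩
  refine ⟨p, q, p, r, p ^ k * c, hp, hq, hpq, hp.two_le, hr.two_le, by omega, by ring, ?_⟩
  change Nat.Coprime _ _
  simp only [Nat.coprime_mul_iff_left, Nat.coprime_mul_iff_right, Nat.coprime_primes, *]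
  simp [hpq, hpr]

open ArithmeticFunction in
lemma five_le_cardFactors {N p₁ p₂ n₁ n₂ n₃ : ℕ} (hp₁ : p₁.Prime) (hp₂ : p₂.Prime)
    (hn₁ : 2 ≤ n₁) (hn₂ : 2 ≤ n₂) (hn₃ : 2 ≤ n₃) (hN : N = n₁ * n₂ * n₃ * p₁ * p₂) :
    5 ≤ cardFactors N := by
  have pos {n : ℕ} (hn : 2 ≤ n) : 1 ≤ cardFactors n := by
    rw [Nat.one_le_iff_ne_zero, Ne, cardFactors_eq_zero_iff_eq_zero_or_one]
    omega
  have h₁ := hp₁.ne_zero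
  have h₂ := hp₂.ne_zero
  have h₃ : n₁ ≠ 0 := by omega
  have h₄ : n₂ ≠ 0 := by omega
  have h₅ : n₃ ≠ 0 := by omega
  have := pos hn₁
  have := pos hn₂
  have := pos hn₃
  rw [hN, cardFactors_mul (by positivity) h₂, cardFactors_mul (by positivity) h₁,
    cardFactors_mul (by positivity) h₅, cardFactors_mul h₃ h₄,
    cardFactors_apply_prime hp₁, cardFactors_apply_prime hp₂]
  omega


theorem not_special_form_iff_vuza_order (N : ℕ) (hN : 2 ≤ N) :
    (¬ ((∃ p α : ℕ, Nat.Prime p ∧ 1 ≤ α ∧ N = p ^ α) ∨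
        (∃ p q α : ℕ, Nat.Prime p ∧ Nat.Prime q ∧ p ≠ q ∧ 1 ≤ α ∧ N = p ^ α * q) ∨
        (∃ p q : ℕ, Nat.Prime p ∧ Nat.Prime q ∧ p ≠ q ∧ N = p ^ 2 * q ^ 2) ∨
        (∃ p q r α : ℕ, Nat.Prime p ∧ Nat.Prime q ∧ Nat.Prime r ∧
          p ≠ q ∧ p ≠ r ∧ q ≠ r ∧ (α = 1 ∨ α = 2) ∧ N = p ^ α * q * r) ∨
        (∃ p q r s : ℕ, Nat.Prime p ∧ Nat.Prime q ∧ Nat.Prime r ∧ Nat.Prime s ∧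
          p ≠ q ∧ p ≠ r ∧ p ≠ s ∧ q ≠ r ∧ q ≠ s ∧ r ≠ s ∧ N = p * q * r * s))) ↔
      ∃ p₁ p₂ n₁ n₂ n₃ : ℕ, Nat.Prime p₁ ∧ Nat.Prime p₂ ∧ p₁ ≠ p₂ ∧
        2 ≤ n₁ ∧ 2 ≤ n₂ ∧ 2 ≤ n₃ ∧ N = n₁ * n₂ * n₃ * p₁ * p₂ ∧
        Nat.gcd (n₁ * p₁) (n₂ * p₂) = 1 := by
  constructor
  · intro h
    simp only [not_or] at h
    obtain ⟨h1, h2, h3, h4, h5⟩ := h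
    by_cases hs : Squarefree N
    · exact exists_of_squarefree hN hs h1 h2 h4 h5
    · rw [Nat.squarefree_iff_prime_squarefree] at hs
      push Not at hs
      obtain ⟨p, hp, hpN⟩ := hs
      exact exists_of_sq_dvd hN hp (by rwa [sq]) h1 h2 h3 h4
  · rintro ⟨p₁, p₂, n₁, n₂, n₃, hp₁, hp₂, -, hn₁, hn₂, hn₃, hNe, hcop⟩
    have hΩ := five_le_cardFactors hp₁ hp₂ hn₁ hn₂ hn₃ hNe
    have key {p q α : ℕ} (hp : p.Prime) (hq : q.Prime) (h : N ∣ p ^ α * q) : False := by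
      have hA : p ∣ n₁ * p₁ := dvd_of_mul_dvd_pow_mul hp hq hn₁ hp₁
        (Dvd.dvd.trans ⟨n₂ * n₃ * p₂, by rw [hNe]; ring⟩ h)
      have hB : p ∣ n₂ * p₂ := dvd_of_mul_dvd_pow_mul hp hq hn₂ hp₂
        (Dvd.dvd.trans ⟨n₁ * n₃ * p₁, by rw [hNe]; ring⟩ h)
      exact Nat.not_coprime_of_dvd_of_dvd hp.one_lt hA hB hcop
    rintro (⟨p, α, hp, -, rfl⟩ | ⟨p, q, α, hp, hq, -, -, rfl⟩ | ⟨p, q, hp, hq, -, rfl⟩ |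
      ⟨p, q, r, α, hp, hq, hr, -, -, -, hα, rfl⟩ |
      ⟨p, q, r, s, hp, hq, hr, hs, -, -, -, -, -, -, rfl⟩)
    · exact key hp hp (dvd_mul_right _ _)
    · exact key hp hq dvd_rfl
    · have := hp.ne_zero
      have := hq.ne_zero
      rw [ArithmeticFunction.cardFactors_mul (by positivity) (by positivity),
        ArithmeticFunction.cardFactors_apply_prime_pow hp,
        ArithmeticFunction.cardFactors_apply_prime_pow hq] at hΩ
      omega
    · have := hp.ne_zero
      have := hq.ne_zero
      have := hr.ne_zero
      rw [ArithmeticFunction.cardFactors_mul (by positivity) (by positivity),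
        ArithmeticFunction.cardFactors_mul (by positivity) (by positivity),
        ArithmeticFunction.cardFactors_apply_prime_pow hp,
        ArithmeticFunction.cardFactors_apply_prime hq,
        ArithmeticFunction.cardFactors_apply_prime hr] at hΩ
      omega
    · have := hp.ne_zero
      have := hq.ne_zero
      have := hr.ne_zero
      have := hs.ne_zero
      rw [ArithmeticFunction.cardFactors_mul (by positivity) (by positivity),
        ArithmeticFunction.cardFactors_mul (by positivity) (by positivity),
        ArithmeticFunction.cardFactors_mul (by positivity) (by positivity),
        ArithmeticFunction.cardFactors_apply_prime hp,
        ArithmeticFunction.cardFactors_apply_prime hq,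
        ArithmeticFunction.cardFactors_apply_prime hr,
        ArithmeticFunction.cardFactors_apply_prime hs] at hΩ
      omega
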